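/- (Cauchy–Pompeiu formula, interior case; Lemma 2.1(a), stated on a disc, the only case the paper uses.) Let c ∈ ℂ and R > 0, and let f : ℂ → ℂ be continuously real-differentiable on an open set containing the closed disc {w : |w − c| ≤ R}. Then for every λ ∈ ℂ with |λ − c| < R one has f(λ) = (1/(2πi)) ∮_{|w−c|=R} f(w)/(w − λ) dw − (1/π) ∫_{|w−c|<R} (∂̄f)(w)/(w − λ) dA(w). -/

import Mathlib

open MeasureTheory

/-- The Wirtinger derivative `∂̄f(z) = (1/2)·(∂ₓf(z) + i·∂_yf(z))`. -/
noncomputable def dbar (f : ℂ → ℂ) (z : ℂ) : ℂ :=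
  (1 / 2) * (fderiv ℝ f z 1 + Complex.I * fderiv ℝ f z Complex.I)

/-- Star-shaped parametrization of the disc, with centre `z`. -/
noncomputable def cpW (c : ℂ) (R : ℝ) (z : ℂ) (t θ : ℝ) : ℂ :=
  z + (t : ℂ) * (circleMap c R θ - z)

lemma cpW_mem_closedBall {c z : ℂ} {R : ℝ} (hR : 0 < R) (hz : ‖z - c‖ < R) {t : ℝ} (ht0 : 0 ≤ t)
    (ht1 : t ≤ 1) (θ : ℝ) : cpW c R z t θ ∈ Metric.closedBall c R := by
  have h1 : z ∈ Metric.closedBall c R := by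
    rw [mem_closedBall_iff_norm]; exact hz.le
  have h2 := circleMap_mem_closedBall c hR.le θ
  have h := (convex_closedBall c R) h1 h2 (sub_nonneg.2 ht1) ht0 (by ring)
  convert h using 1
  simp only [cpW, Complex.real_smul]
  push_cast
  ring

lemma cpW_norm_lt {c z : ℂ} {R : ℝ} (hR : 0 < R) (hz : ‖z - c‖ < R) {t : ℝ} (ht0 : 0 ≤ t)
    (ht1 : t < 1) (θ : ℝ) : ‖cpW c R z t θ - c‖ < R := by
  have e : cpW c R z t θ - c = ((1 - t : ℝ) : ℂ) * (z - c) + (t : ℂ) * (circleMap c R θ - c) := by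
    simp only [cpW]; push_cast; ring
  have hg : ‖circleMap c R θ - c‖ = R := by
    rw [← mem_sphere_iff_norm]; exact circleMap_mem_sphere c hR.le θ
  rw [e]
  refine (norm_add_le _ _).trans_lt ?_
  rw [norm_mul, norm_mul, hg, Complex.norm_real, Complex.norm_real, Real.norm_of_nonneg ht0,
    Real.norm_of_nonneg (by linarith)]
  nlinarith

lemma cp_gamma_ne {c z : ℂ} {R : ℝ} (hR : 0 < R) (hz : ‖z - c‖ < R) (θ : ℝ) :
    circleMap c R θ - z ≠ 0 := by
  intro h
  have hg : ‖circleMap c R θ - c‖ = R := by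
    rw [← mem_sphere_iff_norm]; exact circleMap_mem_sphere c hR.le θ
  rw [sub_eq_zero.1 h] at hg
  linarith

lemma cp_inj_aux {c z : ℂ} {R : ℝ} (hR : 0 < R) (hz : ‖z - c‖ < R) {t t' θ θ' : ℝ} (ht : 0 < t)
    (h : cpW c R z t θ = cpW c R z t' θ') : t' ≤ t := by
  by_contra hlt
  push Not at hlt
  have ht' : 0 < t' := ht.trans hlt
  have htc : (t' : ℂ) ≠ 0 := by exact_mod_cast ht'.ne'
  have e : circleMap c R θ' = cpW c R z (t / t') θ := by
    simp only [cpW] at h ⊢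
    have h2 : (t : ℂ) * (circleMap c R θ - z) = t' * (circleMap c R θ' - z) := add_left_cancel h
    push_cast
    rw [div_mul_eq_mul_div, h2]
    field_simp
    ring
  have h3 := cpW_norm_lt hR hz (t := t / t') (by positivity) ((div_lt_one ht').2 hlt) θ
  rw [← e] at h3
  have hg : ‖circleMap c R θ' - c‖ = R := by
    rw [← mem_sphere_iff_norm]; exact circleMap_mem_sphere c hR.le θ'
  linarith

lemma cp_injOn {c z : ℂ} {R : ℝ} (hR : 0 < R) (hz : ‖z - c‖ < R) :
    Set.InjOn (fun u : ℂ => cpW c R z u.re u.im)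
      {u : ℂ | u.re ∈ Set.Ioo (0 : ℝ) 1 ∧ u.im ∈ Set.Ioc 0 (2 * Real.pi)} := by
  rintro u ⟨hu1, hu2⟩ v ⟨hv1, hv2⟩ h
  have ht : u.re = v.re := le_antisymm (cp_inj_aux hR hz hv1.1 h.symm) (cp_inj_aux hR hz hu1.1 h)
  refine Complex.ext ht ?_
  have hc : (v.re : ℂ) ≠ 0 := by exact_mod_cast hv1.1.ne'
  simp only [cpW, ht] at h
  have h2 : circleMap c R u.im = circleMap c R v.im :=
    sub_left_injective (mul_left_cancel₀ hc (add_left_cancel h))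
  refine injOn_circleMap_of_abs_sub_le (a := 0) (b := 2 * Real.pi) hR.ne' ?_ ?_ ?_ h2
  · rw [zero_sub, abs_neg, abs_of_pos Real.two_pi_pos]
  · rwa [Set.uIoc_of_le Real.two_pi_pos.le]
  · rwa [Set.uIoc_of_le Real.two_pi_pos.le]

lemma cp_image {c z : ℂ} {R : ℝ} (hR : 0 < R) (hz : ‖z - c‖ < R) :
    (fun u : ℂ => cpW c R z u.re u.im) ''
      {u : ℂ | u.re ∈ Set.Ioo (0 : ℝ) 1 ∧ u.im ∈ Set.Ioc 0 (2 * Real.pi)}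
      = Metric.ball c R \ {z} := by
  ext w
  constructor
  · rintro ⟨u, ⟨hu1, hu2⟩, rfl⟩
    refine ⟨mem_ball_iff_norm.2 (cpW_norm_lt hR hz hu1.1.le hu1.2 _), ?_⟩
    simp only [Set.mem_singleton_iff, cpW, add_eq_left, mul_eq_zero, not_or]
    exact ⟨by exact_mod_cast hu1.1.ne', cp_gamma_ne hR hz _⟩
  · rintro ⟨hw, hwz⟩
    have hwz' : w - z ≠ 0 := sub_ne_zero.2 hwz
    have hn : 0 < ‖w - z‖ := norm_pos_iff.2 hwz'
    have hw' : ‖w - c‖ < R := mem_ball_iff_norm.1 hw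
    set s0 : ℝ := 1 + 2 * R / ‖w - z‖ with hs0
    have hs1 : 1 ≤ s0 := by rw [hs0]; have : 0 < 2 * R / ‖w - z‖ := by positivity
                            linarith
    let h : ℝ → ℝ := fun s => ‖z + (s : ℂ) * (w - z) - c‖
    have hcont : ContinuousOn h (Set.Icc 1 s0) := by
      apply Continuous.continuousOn; fun_prop
    have h1 : h 1 < R := by simpa [h] using hw'
    have h2 : R ≤ h s0 := by
      have e : (s0 : ℂ) * (w - z) = (z + (s0 : ℂ) * (w - z) - c) - (z - c) := by ring
      have e2 : ‖(s0 : ℂ) * (w - z)‖ = ‖w - z‖ + 2 * R := by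
        rw [norm_mul, Complex.norm_real, Real.norm_of_nonneg (by linarith), hs0]
        field_simp
      have e3 := norm_sub_le (z + (s0 : ℂ) * (w - z) - c) (z - c)
      rw [← e, e2] at e3
      simp only [h]
      linarith
    obtain ⟨s, hs, hsR⟩ := intermediate_value_Icc hs1 hcont ⟨h1.le, h2⟩
    have hsgt : 1 < s := by
      rcases hs.1.lt_or_eq with h' | h'
      · exact h'
      · rw [← h'] at hsR; linarith
    have hmem : z + (s : ℂ) * (w - z) ∈ Metric.sphere c |R| := by
      rw [mem_sphere_iff_norm, abs_of_pos hR]; exact hsR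
    rw [← image_circleMap_Ioc] at hmem
    obtain ⟨θ, hθ, hθe⟩ := hmem
    have hsc : (s : ℂ) ≠ 0 := by exact_mod_cast (by linarith : s ≠ 0)
    refine ⟨⟨s⁻¹, θ⟩, ⟨⟨by simp; linarith, by simpa using inv_lt_one_of_one_lt₀ hsgt⟩, hθ⟩, ?_⟩
    simp only [cpW, hθe]
    push_cast
    field_simp
    ring

/-- The derivative of the parametrization. -/
noncomputable def cpW' (c : ℂ) (R : ℝ) (z : ℂ) (u : ℂ) : ℂ →L[ℝ] ℂ :=
  Complex.reCLM.smulRight (circleMap c R u.im - z) +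
    Complex.imCLM.smulRight ((u.re : ℂ) * (circleMap 0 R u.im * Complex.I))

lemma cp_hasFDerivAt (c : ℂ) (R : ℝ) (z : ℂ) (u : ℂ) :
    HasFDerivAt (fun u : ℂ => cpW c R z u.re u.im) (cpW' c R z u) u := by
  have h1 : HasFDerivAt (fun u : ℂ => circleMap c R u.im - z)
      (Complex.imCLM.smulRight (circleMap 0 R u.im * Complex.I)) u := by
    have := (hasDerivAt_circleMap c R u.im).hasFDerivAt.comp u (Complex.imCLM.hasFDerivAt (x := u))
    refine (this.sub_const z).congr_fderiv ?_
    ext <;> simp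
  have h2 : HasFDerivAt (fun u : ℂ => u.re) Complex.reCLM u := Complex.reCLM.hasFDerivAt
  have h3 := (h2.smul h1).const_add z
  have h4 : (fun u : ℂ => cpW c R z u.re u.im) =
      fun u : ℂ => z + u.re • (circleMap c R u.im - z) := by
    funext u; simp [cpW, Complex.real_smul]
  rw [h4]
  refine h3.congr_fderiv ?_
  ext <;> simp [cpW'] <;> ring

lemma cp_det (c : ℂ) (R : ℝ) (z : ℂ) (u : ℂ) :
    (cpW' c R z u).det = u.re * ((circleMap c R u.im - z).re * (circleMap 0 R u.im * Complex.I).im -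
      (circleMap c R u.im - z).im * (circleMap 0 R u.im * Complex.I).re) := by
  rw [ContinuousLinearMap.det, ← LinearMap.det_toMatrix Complex.basisOneI, Matrix.det_fin_two]
  simp only [LinearMap.toMatrix_apply]
  simp [cpW', Complex.basisOneI]
  ring

lemma cp_det_pos {c z : ℂ} {R : ℝ} (hR : 0 < R) (hz : ‖z - c‖ < R) {u : ℂ} (hu : 0 < u.re) :
    0 < (cpW' c R z u).det := by
  rw [cp_det]
  refine mul_pos hu ?_
  set e := circleMap 0 R u.im with he
  have h1 : circleMap c R u.im = c + e := by simp [he, circleMap]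
  have h2 : ‖e‖ = R := by rw [he]; simp [abs_of_pos hR]
  have h3 : e.re * e.re + e.im * e.im = R * R := by
    rw [← Complex.normSq_apply, Complex.normSq_eq_norm_sq, h2]; ring
  have h4 : ((starRingEnd ℂ) (z - c) * e).re < R * R := by
    refine (Complex.re_le_norm _).trans_lt ?_
    rw [norm_mul, h2, Complex.norm_conj]
    exact mul_lt_mul_of_pos_right hz hR
  simp only [Complex.mul_re, Complex.conj_re, Complex.conj_im, Complex.sub_re, Complex.sub_im] at h4
  rw [h1]
  simp
  nlinarith

/-- Expansion of a real-linear map of `ℂ`. -/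
lemma cp_linear (L : ℂ →L[ℝ] ℂ) (v : ℂ) : L v = v.re * L 1 + v.im * L Complex.I := by
  conv_lhs => rw [show v = v.re • (1 : ℂ) + v.im • Complex.I by
    simp [Complex.re_add_im]]
  rw [map_add, map_smul, map_smul, Complex.real_smul, Complex.real_smul]

lemma cp_integrand {c z : ℂ} {R : ℝ} (hR : 0 < R) (hz : ‖z - c‖ < R) (f : ℂ → ℂ) {u : ℂ}
    (hu : 0 < u.re) :
    |(cpW' c R z u).det| • (dbar f (cpW c R z u.re u.im) / (cpW c R z u.re u.im - z)) =
      (1 / (2 * Complex.I)) *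
       (fderiv ℝ f (cpW c R z u.re u.im) (circleMap c R u.im - z) *
          (circleMap 0 R u.im * Complex.I / (circleMap c R u.im - z)) -
        fderiv ℝ f (cpW c R z u.re u.im) (circleMap 0 R u.im * Complex.I)) := by
  rw [abs_of_pos (cp_det_pos hR hz hu), cp_det, dbar]
  have hne := cp_gamma_ne hR hz u.im
  have hw : cpW c R z u.re u.im - z = (u.re : ℂ) * (circleMap c R u.im - z) := by simp [cpW]
  have hc : (u.re : ℂ) ≠ 0 := by exact_mod_cast hu.ne'
  rw [hw]
  set L := fderiv ℝ f (cpW c R z u.re u.im)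
  generalize circleMap c R u.im - z = A at *
  generalize circleMap 0 R u.im * Complex.I = B at *
  rw [cp_linear L A, cp_linear L B, Complex.real_smul]
  have hI := Complex.I_ne_zero
  have hI2 := Complex.I_sq
  push_cast
  have key : ((A.re : ℂ) * B.im - A.im * B.re) * (L 1 + Complex.I * L Complex.I) * Complex.I =
     (A.re * L 1 + A.im * L Complex.I) * B - (B.re * L 1 + B.im * L Complex.I) * A := by
    conv_rhs => rw [← Complex.re_add_im A, ← Complex.re_add_im B]
    simp only [Complex.add_re, Complex.ofReal_re, Complex.mul_re, Complex.I_re, mul_zero,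
      Complex.ofReal_im, Complex.I_im, mul_one, sub_self, add_zero, Complex.add_im,
      Complex.mul_im, zero_add]
    linear_combination (((A.re : ℂ) * B.im - A.im * B.re) * L Complex.I) * hI2
  field_simp
  linear_combination key

/-- Cauchy–Pompeiu formula, interior case (Lemma 2.1(a)): if `f` is continuously
real-differentiable on an open set containing the closed disc of radius `R` about `c`,
then for `|z - c| < R`,
`f z = (1/(2πi)) ∮_{|w-c|=R} f w/(w-z) dw − (1/π) ∫_{|w-c|<R} ∂̄f(w)/(w-z) dA(w)`. -/
theorem cauchy_pompeiu_interior (c : ℂ) (R : ℝ) (hR : 0 < R) (f : ℂ → ℂ)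
    (U : Set ℂ) (hU : IsOpen U) (hUb : Metric.closedBall c R ⊆ U)
    (hf : ContDiffOn ℝ 1 f U) (z : ℂ) (hz : ‖z - c‖ < R) :
    f z = (1 / (2 * (Real.pi : ℂ) * Complex.I)) *
        circleIntegral (fun w => f w / (w - z)) c R
      - (1 / (Real.pi : ℂ)) * ∫ w in Metric.ball c R, dbar f w / (w - z) := by
  have hpi := Real.two_pi_pos
  have hcW : Continuous (fun p : ℝ × ℝ => cpW c R z p.1 p.2) := by
    have := continuous_circleMap c R
    unfold cpW; fun_prop
  have hDc : ContinuousOn (fun p : ℝ × ℝ => fderiv ℝ f (cpW c R z p.1 p.2))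
      (Set.Icc 0 1 ×ˢ Set.univ) :=
    (hf.continuousOn_fderiv_of_isOpen hU le_rfl).comp hcW.continuousOn
      (fun p hp => hUb (cpW_mem_closedBall hR hz hp.1.1 hp.1.2 _))
  have hD : ∀ t θ : ℝ, 0 ≤ t → t ≤ 1 →
      HasFDerivAt f (fderiv ℝ f (cpW c R z t θ)) (cpW c R z t θ) := fun t θ h0 h1 =>
    ((hf.contDiffAt (hU.mem_nhds (hUb (cpW_mem_closedBall hR hz h0 h1 θ)))).differentiableAt
      one_ne_zero).hasFDerivAt
  have hγ : Continuous (fun p : ℝ × ℝ => circleMap c R p.2 - z) := by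
    have := continuous_circleMap c R
    fun_prop
  have hγ' : Continuous (fun p : ℝ × ℝ => circleMap 0 R p.2 * Complex.I) := by
    have := continuous_circleMap 0 R
    fun_prop
  let G1 : ℝ × ℝ → ℂ := fun p => fderiv ℝ f (cpW c R z p.1 p.2) (circleMap c R p.2 - z) *
          (circleMap 0 R p.2 * Complex.I / (circleMap c R p.2 - z))
  let G2 : ℝ × ℝ → ℂ := fun p => fderiv ℝ f (cpW c R z p.1 p.2) (circleMap 0 R p.2 * Complex.I)
  have hG1c : ContinuousOn G1 (Set.Icc 0 1 ×ˢ Set.univ) :=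
    (hDc.clm_apply hγ.continuousOn).mul
      (hγ'.continuousOn.div hγ.continuousOn (fun p _ => cp_gamma_ne hR hz p.2))
  have hG2c : ContinuousOn G2 (Set.Icc 0 1 ×ˢ Set.univ) := hDc.clm_apply hγ'.continuousOn
  have hint : ∀ G : ℝ × ℝ → ℂ, ContinuousOn G (Set.Icc 0 1 ×ˢ Set.univ) →
      IntegrableOn G (Set.Ioo 0 1 ×ˢ Set.Ioc 0 (2 * Real.pi)) (volume.prod volume) := fun G hG =>
    ((hG.mono (Set.prod_mono le_rfl (Set.subset_univ (Set.Icc 0 (2 * Real.pi))))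
      ).integrableOn_compact (isCompact_Icc.prod isCompact_Icc)).mono_set
      (Set.prod_mono Set.Ioo_subset_Icc_self Set.Ioc_subset_Icc_self)
  -- the angular part vanishes
  have hI2 : ∫ p in Set.Ioo (0 : ℝ) 1 ×ˢ Set.Ioc 0 (2 * Real.pi), G2 p = 0 := by
    rw [Measure.volume_eq_prod, setIntegral_prod _ (hint G2 hG2c)]
    refine (setIntegral_congr_fun measurableSet_Ioo (g := fun _ => (0 : ℂ)) ?_).trans (by simp)
    intro t ht
    have htc : (t : ℂ) ≠ 0 := by exact_mod_cast ht.1.ne'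
    have hder : ∀ θ ∈ Set.uIcc 0 (2 * Real.pi),
        HasDerivAt (fun θ : ℝ => (t : ℂ)⁻¹ * f (cpW c R z t θ)) (G2 (t, θ)) θ := by
      intro θ _
      have h1 : HasDerivAt (fun θ : ℝ => cpW c R z t θ)
          (t * (circleMap 0 R θ * Complex.I)) θ :=
        (((hasDerivAt_circleMap c R θ).sub_const z).const_mul (t : ℂ)).const_add z
      have h2 := ((hD t θ ht.1.le ht.2.le).comp_hasDerivAt θ h1).const_mul (t : ℂ)⁻¹
      have h3 : (t : ℂ)⁻¹ * (fderiv ℝ f (cpW c R z t θ)) (t * (circleMap 0 R θ * Complex.I)) =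
          G2 (t, θ) := by
        rw [← Complex.real_smul, map_smul, Complex.real_smul, inv_mul_cancel_left₀ htc]
      rw [h3] at h2
      exact h2
    have hc : Continuous (fun θ => G2 (t, θ)) := by
      rw [← continuousOn_univ]
      exact hG2c.comp (by fun_prop) (fun θ _ => ⟨⟨ht.1.le, ht.2.le⟩, trivial⟩)
    have := intervalIntegral.integral_eq_sub_of_hasDerivAt hder (hc.intervalIntegrable _ _)
    rw [intervalIntegral.integral_of_le hpi.le] at this
    simp only [this]
    have hp : circleMap c R (2 * Real.pi) = circleMap c R 0 := by
      simpa using periodic_circleMap c R 0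
    simp [cpW, hp]
  have hfc : ContinuousOn f (Metric.sphere c R) :=
    hf.continuousOn.mono (Metric.sphere_subset_closedBall.trans hUb)
  have hne : ∀ w ∈ Metric.sphere c R, w - z ≠ 0 := by
    intro w hw h
    rw [sub_eq_zero.1 h, mem_sphere_iff_norm] at hw
    linarith
  -- the radial part gives the boundary terms
  have hI1 : ∫ p in Set.Ioo (0 : ℝ) 1 ×ˢ Set.Ioc 0 (2 * Real.pi), G1 p =
      circleIntegral (fun w => f w / (w - z)) c R - f z * (2 * Real.pi * Complex.I) := by
    have hi1 : CircleIntegrable (fun w => f w / (w - z)) c R :=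
      (hfc.div (by fun_prop) hne).circleIntegrable hR.le
    have hi2 : CircleIntegrable (fun w => f z * (w - z)⁻¹) c R :=
      (continuousOn_const.mul (ContinuousOn.inv₀ (by fun_prop) hne)).circleIntegrable hR.le
    rw [← circleIntegral.integral_sub_inv_of_mem_ball (mem_ball_iff_norm.2 hz),
      ← circleIntegral.integral_const_mul, ← circleIntegral.integral_sub hi1 hi2,
      circleIntegral, intervalIntegral.integral_of_le hpi.le, Measure.volume_eq_prod,
      ← setIntegral_prod_swap, setIntegral_prod (fun q => G1 q.swap) (hint G1 hG1c).swap]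
    refine setIntegral_congr_fun measurableSet_Ioc ?_
    intro θ _
    have hder : ∀ t ∈ Set.uIcc (0 : ℝ) 1,
        HasDerivAt (fun t : ℝ => f (cpW c R z t θ) *
          (circleMap 0 R θ * Complex.I / (circleMap c R θ - z))) (G1 (t, θ)) t := by
      intro t ht
      rw [Set.uIcc_of_le zero_le_one] at ht
      have h1 : HasDerivAt (fun t : ℝ => cpW c R z t θ) (circleMap c R θ - z) t := by
        have := ((Complex.ofRealCLM.hasDerivAt (x := t)).mul_const (circleMap c R θ - z)
          ).const_add z
        simpa [cpW] using this
      exact ((hD t θ ht.1 ht.2).comp_hasDerivAt t h1).mul_const _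
    have hc : ContinuousOn (fun t => G1 (t, θ)) (Set.uIcc 0 1) := by
      rw [Set.uIcc_of_le zero_le_one]
      exact hG1c.comp (by fun_prop) (fun t ht => ⟨ht, trivial⟩)
    have := intervalIntegral.integral_eq_sub_of_hasDerivAt hder hc.intervalIntegrable
    rw [intervalIntegral.integral_of_le zero_le_one, integral_Ioc_eq_integral_Ioo] at this
    simp only [Prod.swap_prod_mk]
    rw [this]
    have hg := cp_gamma_ne hR hz θ
    simp [cpW]
    field_simp
  -- change of variables
  have hA : ∫ w in Metric.ball c R, dbar f w / (w - z) =
      (1 / (2 * Complex.I)) * ∫ p in Set.Ioo (0 : ℝ) 1 ×ˢ Set.Ioc 0 (2 * Real.pi),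
        (G1 p - G2 p) := by
    have hs : MeasurableSet
        {u : ℂ | u.re ∈ Set.Ioo (0 : ℝ) 1 ∧ u.im ∈ Set.Ioc 0 (2 * Real.pi)} :=
      (Complex.measurable_re measurableSet_Ioo).inter (Complex.measurable_im measurableSet_Ioc)
    have hae : (Metric.ball c R \ {z} : Set ℂ) =ᵐ[volume] Metric.ball c R :=
      sdiff_null_ae_eq_self (measure_singleton z)
    rw [← setIntegral_congr_set hae, ← cp_image hR hz,
      integral_image_eq_integral_abs_det_fderiv_smul volume hs
        (fun u _ => (cp_hasFDerivAt c R z u).hasFDerivWithinAt) (cp_injOn hR hz),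
      ← integral_const_mul,
      ← Complex.volume_preserving_equiv_real_prod.setIntegral_preimage_emb
        Complex.measurableEquivRealProd.measurableEmbedding]
    exact setIntegral_congr_fun hs (fun u hu => cp_integrand hR hz f hu.1.1)
  have hsub : ∫ p in Set.Ioo (0 : ℝ) 1 ×ˢ Set.Ioc 0 (2 * Real.pi), (G1 p - G2 p) = _ :=
    integral_sub (hint G1 hG1c) (hint G2 hG2c)
  rw [hI1, hI2] at hsub
  rw [hA, hsub]
  have hp : (Real.pi : ℂ) ≠ 0 := by exact_mod_cast Real.pi_ne_zero
  have hI := Complex.I_ne_zero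
  field_simp
  ring
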